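/- Every 3iet word is aperiodic and uniformly recurrent: for every irrational ε ∈ (0,1), every ℓ with max{ε,1−ε} < ℓ < 1, and every x0 ∈ [0,ℓ), the word u_{ε,ℓ,x0} is not eventually periodic and is uniformly recurrent. -/

import Mathlib

/-!
The map `T3 ε ℓ` is the first-return map to `[0, ℓ)` of the rotation `x ↦ x - ε` of `ℝ / ℤ`: on the
letters `A` and `C` it performs one step of the rotation, on `B` it performs two.

*Aperiodicity.* The displacement `T3 ε ℓ x - x` depends only on the letter of `x`, and over a block of
`p ≥ 1` letters it has the form `a - k ε` with integers `a` and `k ≥ p`, hence is nonzero because `ε`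
is irrational. If the coding were eventually of period `p`, the orbit would move by this same nonzero
amount over and over again, which is impossible inside the bounded interval `[0, ℓ)`.

*Uniform recurrence.* The intervals of the exchange are closed on the left, so all points of some
`[y, y + δ)` share the first `n` letters of `y` (`u3_eq_of_close`). By Dirichlet's approximation
theorem some multiple of the rotation moves points by a nonzero amount smaller than `δ`; hence there is
`M`, independent of the starting point, such that the first `M` steps of any rotation orbit meet
`[y, y + δ)` (`rotation_hits`). As `T3` is the first-return map, the orbit under `T3` meets that
interval at least as soon (`exists_iterate_eq`), so the factor read at `y` recurs with bounded gaps.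
-/

/-- The alphabet of 3iet words. -/
inductive L3 | A | B | C
deriving DecidableEq, Inhabited

/-- The three-interval exchange transformation `T_{ε,ℓ}`. -/
noncomputable def T3 (ε ℓ : ℝ) (x : ℝ) : ℝ :=
  if x < ℓ - 1 + ε then x + 1 - ε
  else if x < ε then x + 1 - 2*ε
  else x - ε

/-- The 3iet word `u_{ε,ℓ,x0}` coding the orbit of `x0` under `T_{ε,ℓ}`. -/
noncomputable def u3 (ε ℓ x0 : ℝ) (n : ℕ) : L3 :=
  if (T3 ε ℓ)^[n] x0 < ℓ - 1 + ε then L3.A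
  else if (T3 ε ℓ)^[n] x0 < ε then L3.B
  else L3.C

/-- The two-interval exchange transformation `T_ε`. -/
noncomputable def T2 (ε : ℝ) (x : ℝ) : ℝ := if x < ε then x + 1 - ε else x - ε

/-- The Sturmian word `u_{ε,x0}` of slope `ε` coding the orbit of `x0` under `T_ε`
(letter `0` is `false`, letter `1` is `true`). -/
noncomputable def u2 (ε x0 : ℝ) (n : ℕ) : Bool := if (T2 ε)^[n] x0 < ε then false else true

/-- `w` is a factor of the infinite word `u`. -/
def IsFactor {α : Type*} (w : List α) (u : ℕ → α) : Prop :=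
  ∃ i : ℕ, w = (List.range w.length).map fun j => u (i + j)

/-- The prefix of length `m` of the periodic infinite word `www⋯`;
for `|w| ≤ m` this is the fractional power `w^{m/|w|}`. -/
def powPrefix {α : Type*} [Inhabited α] (w : List α) (m : ℕ) : List α :=
  (List.range m).map fun j => w.getD (j % w.length) default

/-- The index of the factor `w` in the infinite word `u`:
`sup {r ∈ ℚ, r ≥ 1, r|w| ∈ ℕ | w^r is a factor of u}`, as an element of `ℝ ∪ {+∞}`. -/
noncomputable def factorIndex {α : Type*} [Inhabited α] (u : ℕ → α) (w : List α) : EReal :=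
  sSup {x : EReal | ∃ m : ℕ, w.length ≤ m ∧ IsFactor (powPrefix w m) u ∧
    x = (((m : ℝ) / (w.length : ℝ) : ℝ) : EReal)}

/-- The index of the infinite word `u`: `sup {ind(w) | w a nonempty factor of u}`. -/
noncomputable def wordIndex {α : Type*} [Inhabited α] (u : ℕ → α) : EReal :=
  sSup {x : EReal | ∃ w : List α, w ≠ [] ∧ IsFactor w u ∧ x = factorIndex u w}

/-- The Gauss map `x ↦ {1/x}`. -/
noncomputable def gaussMap (x : ℝ) : ℝ := Int.fract x⁻¹

/-- `cfa ε n` is the partial quotient `a_{n+1}` of the continued fraction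
expansion `ε = [0; a₁, a₂, a₃, …]` of the irrational `ε ∈ (0,1)`. -/
noncomputable def cfa (ε : ℝ) (n : ℕ) : ℕ := ⌊(gaussMap^[n] ε)⁻¹⌋₊

/-- The morphism `σ01 : A ↦ 0, B ↦ 01, C ↦ 1`. -/
def sigma01 : L3 → List Bool
  | L3.A => [false]
  | L3.B => [false, true]
  | L3.C => [true]

/-- The morphism `σ10 : A ↦ 0, B ↦ 10, C ↦ 1`. -/
def sigma10 : L3 → List Bool
  | L3.A => [false]
  | L3.B => [true, false]
  | L3.C => [true]

/-- The image `φ(u₀)φ(u₁)φ(u₂)⋯` of an infinite word `u` under a (nonerasing) morphism `φ`. -/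
def morphWord (φ : L3 → List Bool) (u : ℕ → L3) (m : ℕ) : Bool :=
  ((List.range (m+1)).flatMap fun k => φ (u k)).getD m false

/-- `u` is a uniformly recurrent infinite word: every factor occurs infinitely often
with bounded gaps (every window of some length `R` contains an occurrence). -/
def UniformlyRecurrent {α : Type*} (u : ℕ → α) : Prop :=
  ∀ w : List α, IsFactor w u → ∃ R : ℕ, ∀ i : ℕ, ∃ j : ℕ, i ≤ j ∧ j < i + R ∧
    w = (List.range w.length).map fun t => u (j + t)

/-- `u` is eventually periodic. -/
def EventuallyPeriodic {α : Type*} (u : ℕ → α) : Prop :=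
  ∃ N p : ℕ, 0 < p ∧ ∀ n : ℕ, N ≤ n → u (n + p) = u n

/-- The standard words of `ε = [0; a₁, a₂, …]`, with the index shifted by one:
`sw ε 0 = s₋₁ = 1`, `sw ε 1 = s₀ = 0`, `sw ε 2 = s₁ = s₀^{a₁-1} s₋₁`, and
`sw ε (n+3) = s_{n+2} = s_{n+1}^{a_{n+2}} s_n`. -/
noncomputable def sw (ε : ℝ) : ℕ → List Bool
  | 0 => [true]
  | 1 => [false]
  | 2 => (List.replicate (cfa ε 0 - 1) ([false] : List Bool)).flatten ++ [true]
  | (n+3) => (List.replicate (cfa ε (n+1)) (sw ε (n+2))).flatten ++ sw ε (n+1)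

/-- Denominators of the convergents of `ε`, shifted by one: `qq ε 0 = q₋₁ = 0`,
`qq ε 1 = q₀ = 1`, and `qq ε (n+2) = q_{n+1} = a_{n+1} q_n + q_{n-1}`. -/
noncomputable def qq (ε : ℝ) : ℕ → ℕ
  | 0 => 0
  | 1 => 1
  | (n+2) => cfa ε n * qq ε (n+1) + qq ε n

/-- `u` is a 3iet word. -/
def Is3ietWord (u : ℕ → L3) : Prop :=
  ∃ ε ℓ x0 : ℝ, Irrational ε ∧ 0 < ε ∧ ε < 1 ∧ max ε (1 - ε) < ℓ ∧ ℓ < 1 ∧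
    x0 ∈ Set.Ico 0 ℓ ∧ u = u3 ε ℓ x0

/-- `v` is a Sturmian word. -/
def IsSturmianWord (v : ℕ → Bool) : Prop :=
  ∃ ε x0 : ℝ, Irrational ε ∧ 0 < ε ∧ ε < 1 ∧ x0 ∈ Set.Ico (0:ℝ) 1 ∧ v = u2 ε x0

/-- The infinite binary word `v1` is amicable with `v2` (`v1 ∝ v2`). -/
def AmicableInf (v1 v2 : ℕ → Bool) : Prop :=
  ∃ w : ℕ → L3, v1 = morphWord sigma01 w ∧ v2 = morphWord sigma10 w

/-- The morphism `Φ_k : A ↦ 0, B ↦ 01^{k+1}, C ↦ 01^k`. -/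
def Phi (k : ℕ) : L3 → List Bool
  | L3.A => [false]
  | L3.B => false :: List.replicate (k+1) true
  | L3.C => false :: List.replicate k true

/-- The infinite word `B₀B₁B₂⋯` obtained by concatenating the sequence of
(nonempty) blocks `B`. -/
def concatOfBlocks (B : ℕ → List Bool) (m : ℕ) : Bool :=
  ((List.range (m+1)).flatMap B).getD m false

/-- The integer part of the displacement of `T3` on the interval coded by a letter. -/
def letterGain : L3 → ℤ
  | L3.A => 1
  | L3.B => 1
  | L3.C => 0

/-- The number of steps of the rotation `x ↦ x - ε` of `ℝ / ℤ` that `T3` performs on the interval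
coded by a letter. -/
def letterTime : L3 → ℕ
  | L3.A => 1
  | L3.B => 2
  | L3.C => 1

lemma u3_zero (ε ℓ x : ℝ) :
    u3 ε ℓ x 0 = if x < ℓ - 1 + ε then L3.A else if x < ε then L3.B else L3.C := rfl

lemma T3_eq_add (ε ℓ x : ℝ) :
    T3 ε ℓ x = x + letterGain (u3 ε ℓ x 0) - letterTime (u3 ε ℓ x 0) * ε := by
  rw [u3_zero, T3]
  split_ifs <;> simp [letterGain, letterTime]

lemma u3_add (ε ℓ x : ℝ) (j t : ℕ) : u3 ε ℓ x (j + t) = u3 ε ℓ ((T3 ε ℓ)^[j] x) t := by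
  simp only [u3, ← Function.iterate_add_apply, Nat.add_comm t j]

lemma T3_mem {ε ℓ x : ℝ} (hl : max ε (1 - ε) < ℓ) (hl1 : ℓ < 1) (hx : x ∈ Set.Ico 0 ℓ) :
    T3 ε ℓ x ∈ Set.Ico 0 ℓ := by
  obtain ⟨hε, hε'⟩ := max_lt_iff.1 hl
  obtain ⟨ha, hb⟩ := hx
  unfold T3
  split_ifs <;> constructor <;> linarith

lemma iterate_T3_mem {ε ℓ x : ℝ} (hl : max ε (1 - ε) < ℓ) (hl1 : ℓ < 1) (hx : x ∈ Set.Ico 0 ℓ)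
    (n : ℕ) : (T3 ε ℓ)^[n] x ∈ Set.Ico 0 ℓ := by
  induction n with
  | zero => exact hx
  | succ n ih => rw [Function.iterate_succ_apply']; exact T3_mem hl hl1 ih

/-! ### Aperiodicity -/

lemma iterate_T3_eq_add (ε ℓ x : ℝ) (n : ℕ) :
    ∃ (a : ℤ) (k : ℕ), n ≤ k ∧ (T3 ε ℓ)^[n] x = x + a - k * ε := by
  induction n with
  | zero => exact ⟨0, 0, le_rfl, by simp⟩
  | succ n ih =>
    obtain ⟨a, k, hk, h⟩ := ih
    refine ⟨a + letterGain (u3 ε ℓ ((T3 ε ℓ)^[n] x) 0),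
      k + letterTime (u3 ε ℓ ((T3 ε ℓ)^[n] x) 0), ?_, ?_⟩
    · have : 1 ≤ letterTime (u3 ε ℓ ((T3 ε ℓ)^[n] x) 0) := by
        cases u3 ε ℓ ((T3 ε ℓ)^[n] x) 0 <;> simp [letterTime]
      omega
    · rw [Function.iterate_succ_apply', T3_eq_add ε ℓ ((T3 ε ℓ)^[n] x)]
      nth_rewrite 1 [h]
      push_cast
      ring

/-- Points with the same coding move in parallel. -/
lemma iterate_sub_iterate {ε ℓ x y : ℝ} (h : ∀ n, u3 ε ℓ x n = u3 ε ℓ y n) (n : ℕ) :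
    (T3 ε ℓ)^[n] x - (T3 ε ℓ)^[n] y = x - y := by
  induction n with
  | zero => rfl
  | succ n ih =>
    have hn := h n
    rw [← Nat.add_zero n, u3_add, u3_add] at hn
    rw [Function.iterate_succ_apply', Function.iterate_succ_apply', T3_eq_add,
      T3_eq_add ε ℓ ((T3 ε ℓ)^[n] y), hn]
    linarith

lemma not_eventuallyPeriodic {ε ℓ x0 : ℝ} (hirr : Irrational ε)
    (hl : max ε (1 - ε) < ℓ) (hl1 : ℓ < 1) (hx0 : x0 ∈ Set.Ico 0 ℓ) :
    ¬ EventuallyPeriodic (u3 ε ℓ x0) := by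
  rintro ⟨N, p, hp, hper⟩
  set y := (T3 ε ℓ)^[N] x0 with hy
  have hymem : y ∈ Set.Ico 0 ℓ := iterate_T3_mem hl hl1 hx0 N
  have hcode : ∀ n, u3 ε ℓ ((T3 ε ℓ)^[p] y) n = u3 ε ℓ y n := by
    intro n
    rw [← u3_add, hy, ← u3_add, ← u3_add, ← hper (N + n) (by omega)]
    congr 1
    omega
  set d := (T3 ε ℓ)^[p] y - y with hd
  have hd0 : d ≠ 0 := by
    obtain ⟨a, k, hk, h⟩ := iterate_T3_eq_add ε ℓ y p
    intro h0
    have hk0 : k ≠ 0 := by omega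
    refine (hirr.natCast_mul hk0).ne_int a ?_
    linarith
  have hlin : ∀ k : ℕ, (T3 ε ℓ)^[k * p] y = y + k * d := by
    intro k
    induction k with
    | zero => simp
    | succ k ih =>
      have := iterate_sub_iterate hcode (k * p)
      rw [Nat.succ_mul, Function.iterate_add_apply]
      push_cast
      linarith
  obtain ⟨k, hk⟩ := exists_nat_gt (1 / |d|)
  have hk1 : 1 < k * |d| := by rwa [div_lt_iff₀ (abs_pos.2 hd0)] at hk
  have hm := iterate_T3_mem hl hl1 hymem (k * p)
  rw [hlin] at hm
  have : |k * d| < 1 := abs_lt.2 ⟨by linarith [hm.1, hymem.2], by linarith [hm.2, hymem.1]⟩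
  rw [abs_mul, Nat.abs_cast] at this
  linarith

/-! ### Uniform recurrence -/

/-- The code of length `n` is constant on a right neighbourhood of each point. -/
lemma u3_eq_of_close {ε ℓ : ℝ} (hl : max ε (1 - ε) < ℓ) (hl1 : ℓ < 1) (n : ℕ) :
    ∀ y ∈ Set.Ico 0 ℓ, ∃ δ > 0, y + δ ≤ ℓ ∧
      ∀ z ∈ Set.Ico y (y + δ), ∀ t < n, u3 ε ℓ z t = u3 ε ℓ y t := by
  induction n with
  | zero => exact fun y hy => ⟨ℓ - y, by linarith [hy.2], by linarith, by simp⟩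
  | succ n ih =>
    intro y hy
    obtain ⟨δ₁, hδ₁, -, h₁⟩ := ih _ (T3_mem hl hl1 hy)
    obtain ⟨δ₀, hδ₀, hle, h₀⟩ : ∃ δ > 0, y + δ ≤ ℓ ∧
        ∀ z ∈ Set.Ico y (y + δ), u3 ε ℓ z 0 = u3 ε ℓ y 0 := by
      obtain ⟨hε, hε'⟩ := max_lt_iff.1 hl
      simp only [u3_zero]
      rcases lt_or_ge y (ℓ - 1 + ε) with hA | hA
      · refine ⟨ℓ - 1 + ε - y, by linarith, by linarith, fun z hz => ?_⟩
        rw [if_pos (by linarith [hz.2]), if_pos hA]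
      · rcases lt_or_ge y ε with hB | hB
        · refine ⟨ε - y, by linarith, by linarith, fun z hz => ?_⟩
          rw [if_neg (by linarith [hz.1]), if_pos (by linarith [hz.2]), if_neg (by linarith),
            if_pos hB]
        · refine ⟨ℓ - y, by linarith [hy.2], by linarith, fun z hz => ?_⟩
          rw [if_neg (by linarith [hz.1]), if_neg (by linarith [hz.1]), if_neg (by linarith),
            if_neg (by linarith)]
    refine ⟨min δ₀ δ₁, lt_min hδ₀ hδ₁, by linarith [min_le_left δ₀ δ₁], fun z hz t ht => ?_⟩
    have hz0 := h₀ z ⟨hz.1, by linarith [hz.2, min_le_left δ₀ δ₁]⟩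
    cases t with
    | zero => exact hz0
    | succ t =>
      rw [Nat.add_comm, u3_add, u3_add, Function.iterate_one]
      refine h₁ _ ?_ t (by omega)
      rw [T3_eq_add ε ℓ z, T3_eq_add ε ℓ y, hz0]
      constructor <;> linarith [hz.1, hz.2, min_le_right δ₀ δ₁]

/-- `T3` is the first-return map of the rotation by `-ε`: each visit of the rotation orbit to
`[0, ℓ)` lies on the `T3`-orbit. -/
lemma exists_iterate_eq {ε ℓ : ℝ} (hl : max ε (1 - ε) < ℓ) (hl1 : ℓ < 1) (n : ℕ) :
    ∀ z ∈ Set.Ico 0 ℓ, ∀ w ∈ Set.Ico 0 ℓ, ∀ m : ℤ, w = z - n * ε + m →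
      ∃ j ≤ n, (T3 ε ℓ)^[j] z = w := by
  induction n using Nat.strong_induction_on with
  | _ n ih =>
    intro z hz w hw m hwz
    rcases Nat.eq_zero_or_pos n with rfl | hn
    · have h1 : (m : ℝ) < 1 := by push_cast at hwz; linarith [hw.2, hz.1]
      have h2 : (-1 : ℝ) < m := by push_cast at hwz; linarith [hw.1, hz.2]
      have h1' : m < 1 := by exact_mod_cast h1
      have h2' : -1 < m := by exact_mod_cast h2
      obtain rfl : m = 0 := by omega
      exact ⟨0, le_rfl, by simp [hwz]⟩
    · have hT := T3_eq_add ε ℓ z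
      have hpos : 1 ≤ letterTime (u3 ε ℓ z 0) := by
        cases u3 ε ℓ z 0 <;> simp [letterTime]
      by_cases hle : letterTime (u3 ε ℓ z 0) ≤ n
      · obtain ⟨j, hj, hjw⟩ := ih (n - letterTime (u3 ε ℓ z 0)) (by omega) _ (T3_mem hl hl1 hz) w hw
          (m - letterGain (u3 ε ℓ z 0)) (by rw [hT, hwz]; push_cast [hle]; ring)
        exact ⟨j + 1, by omega, hjw⟩
      · -- The remaining case is a point of `I_B` and `n = 1`, where one rotation step leaves `[0, ℓ)`.
        exfalso
        have htwo : letterTime (u3 ε ℓ z 0) = 2 ∧ n = 1 := by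
          have : letterTime (u3 ε ℓ z 0) ≤ 2 := by cases u3 ε ℓ z 0 <;> simp [letterTime]
          omega
        obtain ⟨htwo, rfl⟩ := htwo
        have hB : ℓ - 1 + ε ≤ z ∧ z < ε := by
          rw [u3_zero] at htwo
          split_ifs at htwo with h1 h2
          · simp [letterTime] at htwo
          · exact ⟨not_lt.1 h1, h2⟩
          · simp [letterTime] at htwo
        push_cast at hwz
        have h1 : (m : ℝ) < 1 := by linarith [hw.2, hB.1]
        have h2 : (0 : ℝ) < m := by linarith [hw.1, hB.2]
        have h1' : m < 1 := by exact_mod_cast h1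
        have h2' : 0 < m := by exact_mod_cast h2
        omega

/-- Every orbit of the rotation by `-ε` meets every arc of length `δ` within a number of steps
depending on `δ` only. -/
lemma rotation_hits {ε δ : ℝ} (hirr : Irrational ε) (hδ : 0 < δ) :
    ∃ M : ℕ, ∀ z y : ℝ, ∃ n ≤ M, ∃ m : ℤ, z - n * ε + m ∈ Set.Ico y (y + δ) := by
  obtain ⟨N, hN⟩ := exists_nat_gt (1 / δ)
  have hNpos : 0 < N := by
    have : (0 : ℝ) < N := lt_trans (by positivity) hN
    exact_mod_cast this
  obtain ⟨p, q, hq, -, hpq⟩ := Real.exists_int_int_abs_mul_sub_le ε hNpos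
  lift q to ℕ using hq.le
  have hq' : q ≠ 0 := by omega
  rw [Int.cast_natCast] at hpq
  -- `s` is the displacement of `q` rotation steps, up to an integer.
  set s : ℝ := p - q * ε with hs
  have hs0 : s ≠ 0 := fun h => (hirr.natCast_mul hq').ne_int p (by linarith)
  have hsδ : |s| < δ := by
    rw [abs_sub_comm]
    refine hpq.trans_lt ?_
    rw [div_lt_iff₀ hδ] at hN
    rw [div_lt_iff₀ (by positivity)]
    nlinarith
  obtain ⟨K, hK⟩ := exists_nat_gt (1 / |s|)
  rw [div_lt_iff₀ (abs_pos.2 hs0)] at hK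
  suffices h : ∀ z y : ℝ, ∃ k ≤ K, ∃ m : ℤ, z + k * s + m ∈ Set.Ico y (y + δ) by
    refine ⟨K * q, fun z y => ?_⟩
    obtain ⟨k, hk, m, hm⟩ := h z y
    refine ⟨k * q, Nat.mul_le_mul_right _ hk, k * p + m, ?_⟩
    convert hm using 1
    rw [hs]
    push_cast
    ring
  intro z y
  rcases lt_or_gt_of_ne hs0 with hneg | hpos
  · -- Start in `[y, y + 1)` and walk down.
    rw [abs_of_neg hneg] at hsδ hK
    have ha : 0 ≤ z + ⌈y - z⌉ - y := by linarith [Int.le_ceil (y - z)]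
    have hb : z + ⌈y - z⌉ - y < 1 := by linarith [Int.ceil_lt_add_one (y - z)]
    have hfl := Nat.floor_le (a := (z + ⌈y - z⌉ - y) / -s) (div_nonneg ha (by linarith))
    have hfl' := Nat.lt_floor_add_one ((z + ⌈y - z⌉ - y) / -s)
    rw [le_div_iff₀ (by linarith)] at hfl
    rw [div_lt_iff₀ (by linarith)] at hfl'
    refine ⟨⌊(z + ⌈y - z⌉ - y) / -s⌋₊, ?_, ⌈y - z⌉, by linarith, by linarith⟩
    refine Nat.floor_le_of_le ?_
    rw [div_le_iff₀ (by linarith)]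
    linarith
  · -- Start in `(y - 1, y]` and walk up.
    rw [abs_of_pos hpos] at hsδ hK
    have ha : 0 ≤ y - z - ⌊y - z⌋ := by linarith [Int.floor_le (y - z)]
    have hb : y - z - ⌊y - z⌋ < 1 := by linarith [Int.lt_floor_add_one (y - z)]
    have hce := Nat.le_ceil ((y - z - ⌊y - z⌋) / s)
    have hce' := Nat.ceil_lt_add_one (a := (y - z - ⌊y - z⌋) / s) (div_nonneg ha hpos.le)
    rw [div_le_iff₀ hpos] at hce
    rw [← sub_lt_iff_lt_add, lt_div_iff₀ hpos] at hce'
    refine ⟨⌈(y - z - ⌊y - z⌋) / s⌉₊, ?_, ⌊y - z⌋, by linarith, by linarith⟩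
    refine Nat.ceil_le.2 ?_
    rw [div_le_iff₀ hpos]
    linarith

lemma uniformlyRecurrent_u3 {ε ℓ x0 : ℝ} (hirr : Irrational ε)
    (hl : max ε (1 - ε) < ℓ) (hl1 : ℓ < 1) (hx0 : x0 ∈ Set.Ico 0 ℓ) :
    UniformlyRecurrent (u3 ε ℓ x0) := by
  rintro w ⟨i₀, hw⟩
  have hy := iterate_T3_mem hl hl1 hx0 i₀
  set y := (T3 ε ℓ)^[i₀] x0 with hydef
  obtain ⟨δ, hδ, hle, hcode⟩ := u3_eq_of_close hl hl1 w.length y hy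
  obtain ⟨M, hM⟩ := rotation_hits hirr hδ
  refine ⟨M + 1, fun i => ?_⟩
  have hz := iterate_T3_mem hl hl1 hx0 i
  obtain ⟨n, hn, m, hm⟩ := hM ((T3 ε ℓ)^[i] x0) y
  obtain ⟨j, hj, hjeq⟩ := exists_iterate_eq hl hl1 n _ hz _
    ⟨hy.1.trans hm.1, hm.2.trans_le hle⟩ m rfl
  refine ⟨i + j, by omega, by omega, hw.trans (List.map_congr_left fun t ht => ?_)⟩
  rw [u3_add, u3_add, Nat.add_comm i j, Function.iterate_add_apply, hjeq]
  exact (hcode _ hm t (List.mem_range.1 ht)).symm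

/-- every 3iet word is aperiodic and uniformly recurrent. -/
theorem threeIet_aperiodic_and_uniformlyRecurrent
    (ε ℓ x0 : ℝ) (hirr : Irrational ε) (h0 : 0 < ε) (h1 : ε < 1)
    (hl : max ε (1 - ε) < ℓ) (hl1 : ℓ < 1) (hx0 : x0 ∈ Set.Ico 0 ℓ) :
    ¬ EventuallyPeriodic (u3 ε ℓ x0) ∧ UniformlyRecurrent (u3 ε ℓ x0) :=
  ⟨not_eventuallyPeriodic hirr hl hl1 hx0, uniformlyRecurrent_u3 hirr hl hl1 hx0⟩
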